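/- arXiv:1301.4437 — 2 statements merged into one kernel-verified Lean document; each statement's English description precedes it below -/
import Mathlib

section
/- The complete elliptic integral of the first kind at the singular value k₊ = (√6+√2)/4 satisfies K(k₊) = (1/π)·2^(-7/3)·3^(3/4)·Γ(1/3)³. -/
open Real MeasureTheory

/-- The complete elliptic integral of the first kind,
`K(k) = ∫₀^{π/2} dθ / √(1 - k² sin²θ)`. -/
noncomputable def ellipticK (k : ℝ) : ℝ :=
  ∫ θ in (0:ℝ)..(π/2), 1 / Real.sqrt (1 - k^2 * Real.sin θ ^ 2)

/-! Put `a = √3`. The substitution `x = a tan²(θ/2)` turns `2 K(k) / √a` into the integral over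
`(0, ∞)` of `1 / √(x ((x + a)² - 4 a k² x))`, and at `k = k₊` this cubic is `1 + (x - 1)³`.
Hence `K(k₊)` is a multiple of `∫ dx / √(1 + x³)` over `(-1, ∞)`. The parts over `(-1, 0)` and
`(0, ∞)` are the beta integrals `B(1/3, 1/2) / 3` and `B(1/3, 1/6) / 3`. Their ratio is `cos (π/3)`
by the reflection formula, and the duplication formula expresses `Γ(1/6)` through `Γ(1/3)`. -/

section BetaIntegrals

open Set ProbabilityTheory

variable {E : Type*} [NormedAddCommGroup E] [NormedSpace ℝ E]

lemma integral_Ioo_rpow_mul_one_sub_rpow {a b : ℝ} (ha : 0 < a) (hb : 0 < b) :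
    ∫ x in Ioo (0 : ℝ) 1, x ^ (a - 1) * (1 - x) ^ (b - 1) = beta a b := by
  have hcast : ∀ x ∈ Ioo (0 : ℝ) 1, (x : ℂ) ^ ((a : ℂ) - 1) * (1 - (x : ℂ)) ^ ((b : ℂ) - 1) =
      ((x ^ (a - 1) * (1 - x) ^ (b - 1) : ℝ) : ℂ) := fun x hx ↦ by
    rw [Complex.ofReal_mul, Complex.ofReal_cpow hx.1.le,
      Complex.ofReal_cpow (sub_nonneg.2 hx.2.le)]
    push_cast
    rfl
  rw [beta_eq_betaIntegralReal a b ha hb, Complex.betaIntegral,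
    intervalIntegral.integral_of_le zero_le_one, integral_Ioc_eq_integral_Ioo,
    setIntegral_congr_fun measurableSet_Ioo hcast, integral_complex_ofReal, Complex.ofReal_re]

lemma image_div_one_sub_Ioo : (fun x : ℝ ↦ x / (1 - x)) '' Ioo 0 1 = Ioi 0 := by
  ext y
  constructor
  · rintro ⟨x, ⟨hx0, hx1⟩, rfl⟩
    exact div_pos hx0 (sub_pos.2 hx1)
  · intro (hy : 0 < y)
    refine ⟨y / (1 + y), ⟨by positivity, (div_lt_one (by positivity)).2 (by linarith)⟩, ?_⟩
    field_simp
    ring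

lemma integral_Ioi_eq_integral_comp_div_one_sub (g : ℝ → E) :
    ∫ y in Ioi 0, g y = ∫ x in Ioo (0 : ℝ) 1, ((1 - x) ^ 2)⁻¹ • g (x / (1 - x)) := by
  have hderiv : ∀ x ∈ Ioo (0 : ℝ) 1,
      HasDerivWithinAt (fun x : ℝ ↦ x / (1 - x)) ((1 - x) ^ 2)⁻¹ (Ioo 0 1) x := fun x hx ↦
    (((hasDerivAt_id x).div ((hasDerivAt_id x).const_sub 1)
      (sub_pos.2 hx.2).ne').congr_deriv (by simp [div_eq_mul_inv])).hasDerivWithinAt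
  have hmono : MonotoneOn (fun x : ℝ ↦ x / (1 - x)) (Ioo 0 1) := fun x hx y hy hxy ↦
    div_le_div₀ hy.1.le hxy (sub_pos.2 hy.2) (by linarith)
  rw [← image_div_one_sub_Ioo,
    integral_image_eq_integral_deriv_smul_of_monotoneOn measurableSet_Ioo hderiv hmono]

lemma integral_Ioi_rpow_mul_one_add_rpow {a b : ℝ} (ha : 0 < a) (hb : 0 < b) :
    ∫ y in Ioi (0 : ℝ), y ^ (a - 1) * (1 + y) ^ (-(a + b)) = beta a b := by
  rw [← integral_Ioo_rpow_mul_one_sub_rpow ha hb, integral_Ioi_eq_integral_comp_div_one_sub]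
  refine setIntegral_congr_fun measurableSet_Ioo fun x hx ↦ ?_
  have hx' : 0 < 1 - x := sub_pos.2 hx.2
  have hadd : 1 + x / (1 - x) = (1 - x)⁻¹ := by
    field_simp
    ring
  have hexp : (1 - x) ^ (b - 1) =
      (1 - x) ^ (a + b) * (1 - x) ^ (-(a - 1)) * (1 - x) ^ (-2 : ℝ) := by
    rw [← rpow_add hx', ← rpow_add hx']
    ring_nf
  rw [smul_eq_mul, hadd, inv_rpow hx'.le, ← rpow_neg hx'.le, neg_neg, div_rpow hx.1.le hx'.le, hexp,
    rpow_neg hx'.le 2, rpow_neg hx'.le (a - 1), rpow_two]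
  ring

lemma integral_Ioi_rpow_smul_comp_rpow {p : ℝ} (hp : p ≠ 0) (s : ℝ) (h : ℝ → E) :
    ∫ x in Ioi (0 : ℝ), x ^ (s - 1) • h (x ^ p) =
      |p|⁻¹ • ∫ y in Ioi (0 : ℝ), y ^ (s / p - 1) • h y := by
  rw [← integral_comp_rpow_Ioi (fun y ↦ y ^ (s / p - 1) • h y) hp, ← integral_smul]
  refine setIntegral_congr_fun measurableSet_Ioi fun x (hx : 0 < x) ↦ ?_
  have hexp : x ^ (p - 1) * (x ^ p) ^ (s / p - 1) = x ^ (s - 1) := by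
    rw [← rpow_mul hx.le, ← rpow_add hx]
    congr 1
    field_simp
    ring
  simp only [smul_smul]
  rw [mul_assoc, hexp, inv_mul_cancel_left₀ (abs_ne_zero.2 hp)]

lemma integral_Ioi_rpow_mul_comp_rpow {p : ℝ} (hp : 0 < p) (s : ℝ) (h : ℝ → ℝ) :
    ∫ x in Ioi (0 : ℝ), x ^ (s - 1) * h (x ^ p) =
      (∫ y in Ioi (0 : ℝ), y ^ (s / p - 1) * h y) / p := by
  simpa only [smul_eq_mul, abs_of_pos hp, inv_mul_eq_div] using
    integral_Ioi_rpow_smul_comp_rpow hp.ne' s h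

lemma integral_Ioo_rpow_mul_one_sub_rpow_rpow {p s b : ℝ} (hp : 0 < p) (hs : 0 < s) (hb : 0 < b) :
    ∫ x in Ioo (0 : ℝ) 1, x ^ (s - 1) * (1 - x ^ p) ^ (b - 1) = beta (s / p) b / p := by
  have hsplit (f : ℝ → ℝ) : ∫ x in Ioo (0 : ℝ) 1, f x = ∫ x in Ioi 0, (Iio 1).indicator f x := by
    rw [setIntegral_indicator measurableSet_Iio, Ioi_inter_Iio]
  rw [← integral_Ioo_rpow_mul_one_sub_rpow (div_pos hs hp) hb, hsplit, hsplit]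
  convert integral_Ioi_rpow_mul_comp_rpow hp s
    ((Iio 1).indicator fun y ↦ (1 - y) ^ (b - 1)) using 1
  · refine setIntegral_congr_fun measurableSet_Ioi fun x (hx : 0 < x) ↦ ?_
    have hiff : x ^ p < 1 ↔ x < 1 := by
      simp [rpow_lt_one_iff_of_pos hx, hp, hp.le]
    simp [indicator_apply, hiff]
  · simp only [indicator_apply, mul_ite, mul_zero]

lemma integral_Ioi_rpow_mul_one_add_rpow_rpow {p s b : ℝ} (hp : 0 < p) (hs : 0 < s)
    (hb : s / p < b) :
    ∫ x in Ioi (0 : ℝ), x ^ (s - 1) * (1 + x ^ p) ^ (-b) = beta (s / p) (b - s / p) / p := by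
  rw [integral_Ioi_rpow_mul_comp_rpow hp s fun y ↦ (1 + y) ^ (-b),
    ← integral_Ioi_rpow_mul_one_add_rpow (div_pos hs hp) (sub_pos.2 hb), add_sub_cancel]

lemma integral_Ioo_one_div_sqrt_one_sub_pow {n : ℕ} (hn : n ≠ 0) :
    ∫ x in Ioo (0 : ℝ) 1, 1 / √(1 - x ^ n) = beta (1 / n) (1 / 2) / n := by
  rw [← integral_Ioo_rpow_mul_one_sub_rpow_rpow (by positivity) one_pos one_half_pos]
  refine setIntegral_congr_fun measurableSet_Ioo fun x hx ↦ ?_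
  have hpow : x ^ n < 1 := pow_lt_one₀ hx.1.le hx.2 hn
  rw [sub_self, rpow_zero, one_mul, rpow_natCast, sqrt_eq_rpow, one_div (_ ^ _),
    ← rpow_neg (sub_pos.2 hpow).le]
  norm_num

lemma integral_Ioi_one_div_sqrt_one_add_pow {n : ℕ} (hn : 2 < n) :
    ∫ x in Ioi (0 : ℝ), 1 / √(1 + x ^ n) = beta (1 / n) (1 / 2 - 1 / n) / n := by
  have hlt : (1 : ℝ) / n < 1 / 2 := by gcongr; exact_mod_cast hn
  rw [← integral_Ioi_rpow_mul_one_add_rpow_rpow (by positivity) one_pos hlt]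
  refine setIntegral_congr_fun measurableSet_Ioi fun x (hx : 0 < x) ↦ ?_
  rw [sub_self, rpow_zero, one_mul, rpow_natCast, sqrt_eq_rpow, one_div (_ ^ _),
    ← rpow_neg (by positivity)]

lemma beta_mul_sin {a b : ℝ} (hb0 : 0 < b) (hb1 : b < 1) (hab0 : 0 < a + b) (hab1 : a + b < 1) :
    beta a b * sin (π * b) = beta a (1 - a - b) * sin (π * (a + b)) := by
  have hsin {t : ℝ} (ht0 : 0 < t) (ht1 : t < 1) : Gamma t * Gamma (1 - t) * sin (π * t) = π := by
    rw [Gamma_mul_Gamma_one_sub, div_mul_cancel₀]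
    exact (sin_pos_of_pos_of_lt_pi (by positivity) (by nlinarith [pi_pos])).ne'
  have hΓb : Gamma (1 - b) ≠ 0 := (Gamma_pos_of_pos (sub_pos.2 hb1)).ne'
  have hΓab : Gamma (a + b) ≠ 0 := (Gamma_pos_of_pos hab0).ne'
  rw [beta, beta, show a + (1 - a - b) = 1 - b by ring, sub_sub,
    div_mul_eq_mul_div, div_mul_eq_mul_div, div_eq_div_iff hΓab hΓb]
  linear_combination Gamma a * hsin hb0 hb1 - Gamma a * hsin hab0 hab1

lemma beta_one_half {a : ℝ} (ha0 : -(1 / 2) < a) (ha1 : a < 1 / 2) :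
    beta a (1 / 2) = cos (π * a) * beta a (1 / 2 - a) := by
  have h := beta_mul_sin (a := a) (b := 1 / 2) (by norm_num) (by norm_num) (by linarith)
    (by linarith)
  rwa [mul_one_div, sin_pi_div_two, mul_one, show 1 - a - 1 / 2 = 1 / 2 - a by ring, mul_add,
    mul_one_div, sin_add_pi_div_two, mul_comm] at h

lemma integral_Ioi_neg_one_one_div_sqrt_one_add_pow {n : ℕ} (hodd : Odd n) (hn : 2 < n) :
    ∫ x in Ioi (-1 : ℝ), 1 / √(1 + x ^ n) =
      (1 + cos (π / n)) * beta (1 / n) (1 / 2 - 1 / n) / n := by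
  have hn0 : (0 : ℝ) < n := by positivity
  have hlt : (1 : ℝ) / n < 1 / 2 := by gcongr; exact_mod_cast hn
  have hneg : ∫ x in Ioc (-1 : ℝ) 0, 1 / √(1 + x ^ n) = beta (1 / n) (1 / 2) / n := by
    rw [← integral_Ioo_one_div_sqrt_one_sub_pow (by positivity), ← integral_Ioc_eq_integral_Ioo,
      ← intervalIntegral.integral_of_le (by norm_num),
      ← intervalIntegral.integral_of_le zero_le_one, ← neg_zero,
      ← intervalIntegral.integral_comp_neg]
    simp only [hodd.neg_pow, sub_eq_add_neg, neg_zero]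
  have hpos := integral_Ioi_one_div_sqrt_one_add_pow hn
  have hreflect : beta (1 / n) (1 / 2) = cos (π / n) * beta (1 / n) (1 / 2 - 1 / n) := by
    rw [beta_one_half (by linarith [one_div_pos.2 hn0]) hlt, mul_one_div]
  rw [← Ioc_union_Ioi_eq_Ioi (neg_one_lt_zero.le : (-1 : ℝ) ≤ 0),
    setIntegral_union (Ioc_disjoint_Ioi le_rfl) measurableSet_Ioi, hneg, hpos, hreflect]
  · ring
  · refine Integrable.of_integral_ne_zero ?_
    rw [hneg]
    exact (div_pos (beta_pos (by positivity) one_half_pos) hn0).ne'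
  · refine Integrable.of_integral_ne_zero ?_
    rw [hpos]
    exact (div_pos (beta_pos (by positivity) (sub_pos.2 hlt)) hn0).ne'

lemma beta_one_third_one_sixth :
    beta (1 / 3) (1 / 6) = √3 * Gamma (1 / 3) ^ 3 / (2 ^ (1 / 3 : ℝ) * π) := by
  have hrefl : Gamma (1 / 3) * Gamma (2 / 3) * √3 = 2 * π := by
    have h := Gamma_mul_Gamma_one_sub (1 / 3)
    rw [mul_one_div, sin_pi_div_three, show (1 : ℝ) - 1 / 3 = 2 / 3 by norm_num] at h
    rw [h]
    field_simp
  have hdupl : Gamma (1 / 6) * Gamma (2 / 3) * 2 ^ (1 / 3 : ℝ) = 2 * Gamma (1 / 3) * √π := by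
    have h := Gamma_mul_Gamma_add_half (1 / 6)
    have htwo : (2 : ℝ) ^ (2 / 3 : ℝ) * 2 ^ (1 / 3 : ℝ) = 2 := by
      rw [← rpow_add two_pos]
      norm_num
    rw [show (1 / 6 + 1 / 2 : ℝ) = 2 / 3 by norm_num, show (2 * (1 / 6) : ℝ) = 1 / 3 by norm_num,
      show (1 - 1 / 3 : ℝ) = 2 / 3 by norm_num] at h
    rw [h]
    linear_combination Gamma (1 / 3) * √π * htwo
  rw [beta, show (1 / 3 + 1 / 6 : ℝ) = 1 / 2 by norm_num, Gamma_one_half_eq,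
    div_eq_div_iff (by positivity) (by positivity)]
  linear_combination Gamma (1 / 3) ^ 2 * √3 / 2 * hdupl -
    Gamma (1 / 3) * Gamma (1 / 6) * 2 ^ (1 / 3 : ℝ) / 2 * hrefl

end BetaIntegrals

section EllipticK

open Set

lemma image_tan_Ioo_zero_pi_div_two : tan '' Ioo 0 (π / 2) = Ioi 0 := by
  ext s
  constructor
  · rintro ⟨φ, ⟨hφ0, hφ1⟩, rfl⟩
    exact tan_pos_of_pos_of_lt_pi_div_two hφ0 hφ1
  · exact fun hs ↦ ⟨arctan s, ⟨arctan_pos.2 hs, arctan_lt_pi_div_two s⟩, tan_arctan s⟩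

lemma integral_Ioi_eq_integral_comp_tan {E : Type*} [NormedAddCommGroup E] [NormedSpace ℝ E]
    (g : ℝ → E) : ∫ s in Ioi 0, g s = ∫ φ in Ioo 0 (π / 2), (1 / cos φ ^ 2) • g (tan φ) := by
  have hsub : Ioo 0 (π / 2) ⊆ Ioo (-(π / 2)) (π / 2) :=
    Ioo_subset_Ioo_left (by linarith [pi_pos])
  rw [← image_tan_Ioo_zero_pi_div_two,
    integral_image_eq_integral_deriv_smul_of_monotoneOn measurableSet_Ioo
      (fun φ hφ ↦ (hasDerivAt_tan_of_mem_Ioo (hsub hφ)).hasDerivWithinAt)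
      (strictMonoOn_tan.monotoneOn.mono hsub)]

lemma one_sub_sq_mul_sin_sq_pos {k : ℝ} (hk : k ^ 2 < 1) (θ : ℝ) : 0 < 1 - k ^ 2 * sin θ ^ 2 := by
  nlinarith [sin_sq_le_one θ, sq_nonneg (sin θ), sq_nonneg k]

lemma ellipticK_eq_integral_sin_two_mul {k : ℝ} (hk : k ^ 2 < 1) :
    ellipticK k = ∫ φ in (0 : ℝ)..(π / 2), 1 / √(1 - k ^ 2 * sin (2 * φ) ^ 2) := by
  set f : ℝ → ℝ := fun θ ↦ 1 / √(1 - k ^ 2 * sin θ ^ 2) with hf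
  have hcont : Continuous f := continuous_const.div (by fun_prop) fun θ ↦
    (sqrt_pos.2 (one_sub_sq_mul_sin_sq_pos hk θ)).ne'
  have hsymm : ∫ θ in (π / 2)..π, f θ = ellipticK k := by
    have h := intervalIntegral.integral_comp_sub_left (a := 0) (b := π / 2) f π
    rw [sub_zero, sub_half] at h
    rw [← h, ellipticK]
    simp only [hf, sin_pi_sub]
  have hscale := intervalIntegral.integral_comp_mul_left (a := 0) (b := π / 2) f two_ne_zero
  rw [mul_zero, mul_div_cancel₀ _ two_ne_zero, ← intervalIntegral.integral_add_adjacent_intervals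
      (hcont.intervalIntegrable 0 (π / 2)) (hcont.intervalIntegrable (π / 2) π), hsymm] at hscale
  rw [hscale, smul_eq_mul, hf, ← ellipticK]
  ring

lemma ellipticK_eq_integral_quartic {k : ℝ} (hk : k ^ 2 < 1) :
    ellipticK k = ∫ s in Ioi (0 : ℝ), 1 / √((s ^ 2 + 1) ^ 2 - 4 * k ^ 2 * s ^ 2) := by
  rw [integral_Ioi_eq_integral_comp_tan, ellipticK_eq_integral_sin_two_mul hk,
    intervalIntegral.integral_of_le pi_div_two_pos.le, integral_Ioc_eq_integral_Ioo]
  refine setIntegral_congr_fun measurableSet_Ioo fun φ hφ ↦ ?_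
  have hcos : 0 < cos φ := cos_pos_of_mem_Ioo ⟨by linarith [hφ.1, pi_pos], hφ.2⟩
  have hquartic : (tan φ ^ 2 + 1) ^ 2 - 4 * k ^ 2 * tan φ ^ 2 =
      (1 - k ^ 2 * sin (2 * φ) ^ 2) / (cos φ ^ 2) ^ 2 := by
    rw [tan_eq_sin_div_cos, sin_two_mul]
    field_simp
    rw [sin_sq_add_cos_sq]
    ring
  rw [smul_eq_mul, hquartic, sqrt_div (one_sub_sq_mul_sin_sq_pos hk _).le, sqrt_sq (by positivity)]
  field_simp

lemma ellipticK_eq_integral_cubic {a k : ℝ} (ha : 0 < a) (hk : k ^ 2 < 1) :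
    ellipticK k = √a / 2 * ∫ x in Ioi (0 : ℝ), 1 / √(x * ((x + a) ^ 2 - 4 * a * k ^ 2 * x)) := by
  have hsubst : ∫ x in Ioi (0 : ℝ), 1 / √(x * ((x + a) ^ 2 - 4 * a * k ^ 2 * x)) =
      a * ∫ s in Ioi (0 : ℝ), 2 * s *
        (1 / √(a * s ^ 2 * ((a * s ^ 2 + a) ^ 2 - 4 * a * k ^ 2 * (a * s ^ 2)))) := by
    have hscale := integral_comp_mul_left_Ioi'
      (fun x ↦ 1 / √(x * ((x + a) ^ 2 - 4 * a * k ^ 2 * x))) 0 ha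
    rw [mul_zero] at hscale
    rw [← hscale, smul_eq_mul, ← integral_comp_rpow_Ioi_of_pos two_pos]
    simp only [smul_eq_mul, rpow_two, show (2 : ℝ) - 1 = 1 by norm_num, rpow_one]
  rw [hsubst, ellipticK_eq_integral_quartic hk, ← mul_assoc, ← integral_const_mul]
  refine setIntegral_congr_fun measurableSet_Ioi fun s (hs : 0 < s) ↦ ?_
  have hcubic : a * s ^ 2 * ((a * s ^ 2 + a) ^ 2 - 4 * a * k ^ 2 * (a * s ^ 2)) =
      a * (a * s) ^ 2 * ((s ^ 2 + 1) ^ 2 - 4 * k ^ 2 * s ^ 2) := by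
    ring
  rw [hcubic, sqrt_mul (by positivity), sqrt_mul ha.le, sqrt_sq (by positivity)]
  field_simp

lemma ellipticK_eq_integral_sqrt_one_add_cube :
    ellipticK ((√6 + √2) / 4) = √(√3) / 2 * ∫ x in Ioi (-1 : ℝ), 1 / √(1 + x ^ 3) := by
  have h3 : √3 ^ 2 = 3 := sq_sqrt (by norm_num)
  have hk : ((√6 + √2) / 4) ^ 2 = (2 + √3) / 4 := by
    have h6 : √6 = √2 * √3 := by rw [← sqrt_mul zero_le_two]; norm_num
    have h2 : √2 ^ 2 = 2 := sq_sqrt zero_le_two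
    rw [h6]
    linear_combination (√3 + 1) ^ 2 / 16 * h2 + h3 / 8
  have hk1 : ((√6 + √2) / 4) ^ 2 < 1 := by
    have : √3 < 2 := (sqrt_lt' two_pos).2 (by norm_num)
    linarith
  have htranslate : ∫ x in Ioi (-1 : ℝ), 1 / √(1 + x ^ 3) =
      ∫ x in Ioi (0 : ℝ), 1 / √(1 + (x - 1) ^ 3) := by
    rw [← (measurePreserving_sub_right volume (1 : ℝ)).setIntegral_preimage_emb
      (measurableEmbedding_subRight 1), preimage_sub_const_Ioi, neg_add_cancel]
  rw [htranslate, ellipticK_eq_integral_cubic (a := √3) (by positivity) hk1, hk]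
  congr! 5 with x
  linear_combination (x - x ^ 2) * h3

end EllipticK

/-- `K(k₊) = (1/π)·2^(-7/3)·3^(3/4)·Γ(1/3)³` for the singular value `k₊ = (√6+√2)/4`. -/
theorem ellipticK_singular_value_plus :
    ellipticK ((Real.sqrt 6 + Real.sqrt 2) / 4) =
      (1 / π) * (2:ℝ) ^ (-(7:ℝ)/3) * (3:ℝ) ^ ((3:ℝ)/4) * Real.Gamma (1/3) ^ 3 := by
  have hbeta : ∫ x in Set.Ioi (-1 : ℝ), 1 / √(1 + x ^ 3) =
      ProbabilityTheory.beta (1 / 3) (1 / 6) / 2 := by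
    have h := integral_Ioi_neg_one_one_div_sqrt_one_add_pow (n := 3) (by decide) (by norm_num)
    rw [Nat.cast_ofNat, cos_pi_div_three, show (1 / 2 - 1 / 3 : ℝ) = 1 / 6 by norm_num] at h
    rw [h]
    ring
  have htwo : (2 : ℝ) ^ (-(7 : ℝ) / 3) = (4 * 2 ^ (1 / 3 : ℝ))⁻¹ := by
    rw [show (-(7 : ℝ) / 3) = -(2 + 1 / 3) by norm_num, rpow_neg zero_le_two, rpow_add two_pos,
      rpow_two]
    norm_num
  have hthree : (3 : ℝ) ^ ((3 : ℝ) / 4) = √(√3) * √3 := by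
    rw [sqrt_eq_rpow, sqrt_eq_rpow, ← rpow_mul zero_le_three, ← rpow_add three_pos]
    norm_num
  rw [ellipticK_eq_integral_sqrt_one_add_cube, hbeta, beta_one_third_one_sixth, htwo, hthree]
  field_simp
  norm_num
end

section
/- With ω = e^{iπ/3} (equivalently ω = -1/2 - i√3/2 in the paper's convention; state for ω a primitive 6th or cube root as appropriate), the hypergeometric value ₂F₁(1/2,1/2;1;-ω) equals ((1+i)/(π²√2))·2^(-7/3)·3^(3/4)·Γ(1/3)³ + ((1-i)/(π²√2))·2^(-7/3)·3^(1/4)·Γ(1/3)³, where ω = (-1 + i√3)/2 is replaced so that -ω = (1 + i√3)/2. -/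
open Real MeasureTheory Complex

/-- The Gauss hypergeometric function `F(z) = ₂F₁(1/2, 1/2; 1; z)`, realized through its
Euler-type integral representation `F(z) = (2/π) ∫₀^{π/2} (1 - z sin²θ)^(-1/2) dθ`,
which provides the analytic continuation of the hypergeometric series to the cut plane
`ℂ ∖ [1,∞)`, in particular to the boundary point `-ω = (1+i√3)/2` of the unit disk. -/
noncomputable def hypF (z : ℂ) : ℂ :=
  (2 / π) * ∫ θ in (0:ℝ)..(π/2), ((1:ℂ) - z * (Real.sin θ : ℂ)^2) ^ (-(1/2) : ℂ)

/-!
The substitution `w = -1/2 + i√3 (sin²θ - 1/2)` moves along a side of the triangle of cube roots of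
unity and turns `dw / √(1 - w³)` into a constant multiple of `dθ / √(1 - z sin²θ)` with
`z = (1 + i√3) / 2`. Hence the elliptic integral defining `₂F₁(1/2, 1/2; 1; z)` is, up to that
constant, the difference of the values at two cube roots of unity `ρ` of a primitive of
`(1 - w³)^(-1/2)` on the unit disk. By rotational symmetry the value at `ρ` is `ρ` times the value
at `1`, which is the Beta integral `B(1/3, 1/2) / 3`; reflection and duplication express it through
`Γ(1/3)`.
-/

open Metric Set

section RadialPrimitive

variable {E : Type*} [NormedAddCommGroup E] [NormedSpace ℂ E] {f : ℂ → E} {R : ℝ} {w : ℂ}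

/-- The integral of `f` along the segment from `0` to `w`. For `f` holomorphic on a disk around `0`
it is the primitive of `f` vanishing at `0`; the integral representation also makes sense on the
boundary circle when `f` has integrable singularities there. -/
noncomputable def radialPrimitive (f : ℂ → E) (w : ℂ) : E :=
  ∫ s in (0 : ℝ)..1, w • f (s * w)

lemma ofReal_mul_mem_ball {s : ℝ} (hs : s ∈ Icc (0 : ℝ) 1) (hw : w ∈ ball 0 R) :
    (s : ℂ) * w ∈ ball 0 R :=
  balanced_ball_zero.smul_mem ((Complex.norm_of_nonneg hs.1).trans_le hs.2) hw

lemma ofReal_mul_mem_ball_of_mem_closedBall {s : ℝ} (hR : 0 < R) (hs : s ∈ Ico (0 : ℝ) 1)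
    (hw : w ∈ closedBall 0 R) : (s : ℂ) * w ∈ ball 0 R := by
  rw [mem_closedBall_zero_iff] at hw
  rw [mem_ball_zero_iff, norm_mul, Complex.norm_of_nonneg hs.1]
  exact (mul_le_mul_of_nonneg_left hw hs.1).trans_lt (mul_lt_of_lt_one_left hR hs.2)

lemma radialPrimitive_eq_sub [CompleteSpace E] {F : ℂ → E}
    (hF : ∀ v ∈ ball 0 R, HasDerivAt F (f v) v) (hf : ContinuousOn f (ball 0 R))
    (hw : w ∈ ball 0 R) : radialPrimitive f w = F w - F 0 := by
  have hmem : ∀ s ∈ uIcc (0 : ℝ) 1, (s : ℂ) * w ∈ ball 0 R := fun s hs ↦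
    ofReal_mul_mem_ball (by rwa [uIcc_of_le zero_le_one] at hs) hw
  have hderiv : ∀ s ∈ uIcc (0 : ℝ) 1, HasDerivAt (fun s : ℝ ↦ F (s * w)) (w • f (s * w)) s :=
    fun s hs ↦ (hF _ (hmem s hs)).scomp s
      (by simpa using (Complex.ofRealCLM.hasDerivAt (x := s)).mul_const w)
  have hcont : ContinuousOn (fun s : ℝ ↦ w • f (s * w)) (uIcc (0 : ℝ) 1) :=
    (hf.comp (by fun_prop) hmem).const_smul w
  rw [radialPrimitive,
    intervalIntegral.integral_eq_sub_of_hasDerivAt hderiv hcont.intervalIntegrable]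
  simp

lemma hasDerivAt_radialPrimitive [CompleteSpace E] (hf : DifferentiableOn ℂ f (ball 0 R))
    (hw : w ∈ ball 0 R) : HasDerivAt (radialPrimitive f) (f w) w := by
  obtain ⟨F, hF⟩ := hf.isExactOn_ball
  refine ((hF w hw).sub_const (F 0)).congr_of_eventuallyEq ?_
  filter_upwards [isOpen_ball.mem_nhds hw] with v hv
  exact radialPrimitive_eq_sub hF hf.continuousOn hv

lemma continuousOn_radialPrimitive_closedBall {bound : ℝ → ℝ} (hR : 0 < R)
    (hf : ContinuousOn f (ball 0 R)) (hbound : IntervalIntegrable bound volume 0 1)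
    (hle : ∀ w ∈ closedBall (0 : ℂ) R, ∀ s ∈ Ioo (0 : ℝ) 1, ‖f (s * w)‖ ≤ bound s) :
    ContinuousOn (radialPrimitive f) (closedBall 0 R) := by
  intro w₀ hw₀
  have ae_mem : ∀ᵐ s : ℝ, s ∈ uIoc 0 1 → s ∈ Ioo (0 : ℝ) 1 := by
    filter_upwards [Measure.ae_ne volume (1 : ℝ)] with s hs hs'
    rw [uIoc_of_le zero_le_one] at hs'
    exact ⟨hs'.1, hs'.2.lt_of_ne hs⟩
  refine intervalIntegral.continuousWithinAt_of_dominated_interval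
    (bound := fun s ↦ R * bound s) ?_ ?_ (hbound.const_mul R) ?_
  · filter_upwards [self_mem_nhdsWithin] with w hw
    rw [uIoc_of_le zero_le_one, ← restrict_Ioo_eq_restrict_Ioc]
    refine ContinuousOn.aestronglyMeasurable (ContinuousOn.const_smul ?_ w) measurableSet_Ioo
    exact hf.comp (by fun_prop) fun s hs ↦
      ofReal_mul_mem_ball_of_mem_closedBall hR (Ioo_subset_Ico_self hs) hw
  · filter_upwards [self_mem_nhdsWithin] with w hw
    filter_upwards [ae_mem] with s hs hs'
    rw [norm_smul]
    exact mul_le_mul (mem_closedBall_zero_iff.1 hw) (hle w hw s (hs hs')) (norm_nonneg _) hR.le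
  · filter_upwards [ae_mem] with s hs hs'
    have hsw₀ := ofReal_mul_mem_ball_of_mem_closedBall hR (Ioo_subset_Ico_self (hs hs')) hw₀
    have hfs : ContinuousAt (fun w ↦ f (s * w)) w₀ :=
      ContinuousAt.comp' (hf.continuousAt (isOpen_ball.mem_nhds hsw₀)) (by fun_prop)
    exact (continuousAt_id.smul hfs).continuousWithinAt

lemma radialPrimitive_mul {ρ : ℂ} (hf : ∀ v, f (ρ * v) = f v) (w : ℂ) :
    radialPrimitive f (ρ * w) = ρ • radialPrimitive f w := by
  simp only [radialPrimitive, ← intervalIntegral.integral_smul, mul_left_comm _ ρ, hf, mul_smul]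

end RadialPrimitive

section SuperellipticIntegral

variable {n : ℕ} {b w : ℂ}

/-- The integral `∫₀ʷ (1 - tⁿ)ᵇ dt` of the superelliptic differential `(1 - tⁿ)ᵇ dt` (principal
branch), meaningful on the closed unit disk. -/
noncomputable def superellipticIntegral (n : ℕ) (b : ℂ) : ℂ → ℂ :=
  radialPrimitive fun t ↦ (1 - t ^ n) ^ b

lemma one_sub_pow_mem_slitPlane (hn : n ≠ 0) (hw : ‖w‖ < 1) : 1 - w ^ n ∈ slitPlane := by
  refine Or.inl ?_
  rw [sub_re, one_re, sub_pos]
  calc (w ^ n).re ≤ ‖w‖ ^ n := norm_pow w n ▸ re_le_norm (w ^ n)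
    _ < 1 := pow_lt_one₀ (norm_nonneg w) hw hn

lemma differentiableOn_one_sub_pow_cpow (hn : n ≠ 0) (b : ℂ) :
    DifferentiableOn ℂ (fun t : ℂ ↦ (1 - t ^ n) ^ b) (ball 0 1) :=
  DifferentiableOn.cpow (by fun_prop) (by fun_prop) fun _ ht ↦
    one_sub_pow_mem_slitPlane hn (mem_ball_zero_iff.1 ht)

lemma norm_cpow_le_rpow_re_mul_exp (z b : ℂ) :
    ‖z ^ b‖ ≤ ‖z‖ ^ b.re * Real.exp (π * |b.im|) := by
  refine (norm_cpow_le z b).trans ?_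
  rw [div_eq_mul_inv, ← Real.exp_neg]
  gcongr
  calc -(arg z * b.im) ≤ |arg z| * |b.im| := by rw [← abs_mul]; exact neg_le_abs _
    _ ≤ π * |b.im| := by gcongr; exact abs_arg_le_pi z

lemma norm_one_sub_pow_cpow_le {r : ℝ} (hn : n ≠ 0) (hb : b.re ≤ 0) (hr : r < 1) (hw : ‖w‖ ≤ r) :
    ‖(1 - w ^ n) ^ b‖ ≤ (1 - r) ^ b.re * Real.exp (π * |b.im|) := by
  have hdist : 1 - r ≤ ‖1 - w ^ n‖ :=
    calc 1 - r ≤ 1 - ‖w‖ ^ n := by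
          gcongr
          exact (pow_le_of_le_one (norm_nonneg w) (hw.trans hr.le) hn).trans hw
      _ ≤ ‖1 - w ^ n‖ := by simpa using norm_sub_norm_le (1 : ℂ) (w ^ n)
  refine (norm_cpow_le_rpow_re_mul_exp _ b).trans ?_
  gcongr ?_ * _
  exact Real.rpow_le_rpow_of_nonpos (sub_pos.2 hr) hdist hb

lemma hasDerivAt_superellipticIntegral (hn : n ≠ 0) (hw : ‖w‖ < 1) :
    HasDerivAt (superellipticIntegral n b) ((1 - w ^ n) ^ b) w :=
  hasDerivAt_radialPrimitive (differentiableOn_one_sub_pow_cpow hn b) (mem_ball_zero_iff.2 hw)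

lemma continuousOn_superellipticIntegral (hn : n ≠ 0) (hb : b.re ∈ Ioc (-1) 0) :
    ContinuousOn (superellipticIntegral n b) (closedBall 0 1) := by
  have hbound : IntervalIntegrable (fun s : ℝ ↦ (1 - s) ^ b.re * Real.exp (π * |b.im|))
      volume 0 1 := by
    simpa using ((intervalIntegral.intervalIntegrable_rpow' hb.1
      (a := 0) (b := 1)).comp_sub_left 1).symm.mul_const (Real.exp (π * |b.im|))
  refine continuousOn_radialPrimitive_closedBall one_pos
    (differentiableOn_one_sub_pow_cpow hn b).continuousOn hbound fun w hw s hs ↦ ?_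
  refine norm_one_sub_pow_cpow_le hn hb.2 hs.2 ?_
  rw [norm_mul, Complex.norm_of_nonneg hs.1.le]
  exact mul_le_of_le_one_right hs.1.le (mem_closedBall_zero_iff.1 hw)

lemma superellipticIntegral_of_pow_eq_one {ρ : ℂ} (hρ : ρ ^ n = 1) :
    superellipticIntegral n b ρ = ρ * superellipticIntegral n b 1 := by
  simpa [superellipticIntegral] using
    radialPrimitive_mul (f := fun t ↦ (1 - t ^ n) ^ b) (fun v ↦ by rw [mul_pow, hρ, one_mul]) 1

lemma image_pow_Ioo_zero_one (hn : n ≠ 0) : (fun x : ℝ ↦ x ^ n) '' Ioo 0 1 = Ioo 0 1 := by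
  refine Subset.antisymm ?_ fun y hy ↦ ?_
  · rintro _ ⟨x, hx, rfl⟩
    exact ⟨pow_pos hx.1 n, pow_lt_one₀ hx.1.le hx.2 hn⟩
  · exact ⟨y ^ (n⁻¹ : ℝ),
      ⟨Real.rpow_pos_of_pos hy.1 _, Real.rpow_lt_one hy.1.le hy.2 (by positivity)⟩,
      Real.rpow_inv_natCast_pow hy.1.le hn⟩

lemma pow_cpow_inv_sub_one {x : ℝ} (hn : n ≠ 0) (hx : 0 < x) :
    ((x : ℂ) ^ n) ^ ((n : ℂ)⁻¹ - 1) = ((x : ℂ) ^ (n - 1))⁻¹ := by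
  have hnc : (n : ℝ) ≠ 0 := by exact_mod_cast hn
  have hexp : (n : ℝ) * ((n : ℝ)⁻¹ - 1) = -((n - 1 : ℕ) : ℝ) := by
    rw [Nat.cast_pred (Nat.pos_of_ne_zero hn), mul_sub, mul_inv_cancel₀ hnc]
    ring
  calc ((x : ℂ) ^ n) ^ ((n : ℂ)⁻¹ - 1)
      = (((x ^ n) ^ ((n : ℝ)⁻¹ - 1) : ℝ) : ℂ) := by
        rw [Complex.ofReal_cpow (by positivity)]
        push_cast
        rfl
    _ = ((x : ℂ) ^ (n - 1))⁻¹ := by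
        rw [← Real.rpow_natCast, ← Real.rpow_mul hx.le, hexp, Real.rpow_neg hx.le,
          Real.rpow_natCast]
        push_cast
        rfl

lemma superellipticIntegral_one (hn : n ≠ 0) (b : ℂ) :
    superellipticIntegral n b 1 = (n : ℂ)⁻¹ * betaIntegral (n : ℂ)⁻¹ (b + 1) := by
  have hmono : MonotoneOn (fun x : ℝ ↦ x ^ n) (Ioo 0 1) := fun x hx y _ hxy ↦
    pow_le_pow_left₀ hx.1.le hxy n
  have hsubst := integral_image_eq_integral_deriv_smul_of_monotoneOn measurableSet_Ioo
    (fun x _ ↦ (hasDerivAt_pow n x).hasDerivWithinAt) hmono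
    (fun x : ℝ ↦ (x : ℂ) ^ ((n : ℂ)⁻¹ - 1) * (1 - (x : ℂ)) ^ (b + 1 - 1))
  rw [image_pow_Ioo_zero_one hn] at hsubst
  have hint (f : ℝ → ℂ) : ∫ x in (0 : ℝ)..1, f x = ∫ x in Ioo 0 1, f x := by
    rw [intervalIntegral.integral_of_le zero_le_one, integral_Ioc_eq_integral_Ioo]
  rw [superellipticIntegral, radialPrimitive, betaIntegral, hint, hint, hsubst,
    ← integral_const_mul]
  refine setIntegral_congr_fun measurableSet_Ioo fun x hx ↦ ?_
  have hx0 : (x : ℂ) ≠ 0 := by exact_mod_cast hx.1.ne'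
  simp only [real_smul, smul_eq_mul, mul_one, one_mul, add_sub_cancel_right, ofReal_mul,
    ofReal_natCast, ofReal_pow, pow_cpow_inv_sub_one hn hx.1]
  field_simp

end SuperellipticIntegral

lemma Gamma_five_sixths :
    Real.Gamma (5 / 6) = 2 ^ (4 / 3 : ℝ) * π * √π / (√3 * Real.Gamma (1 / 3) ^ 2) := by
  have duplication : Real.Gamma (1 / 3) * Real.Gamma (5 / 6) =
      Real.Gamma (2 / 3) * 2 ^ (1 / 3 : ℝ) * √π := by
    convert Real.Gamma_mul_Gamma_add_half (1 / 3) using 3 <;> norm_num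
  have reflection : Real.Gamma (1 / 3) * Real.Gamma (2 / 3) = 2 * π / √3 := by
    convert Real.Gamma_mul_Gamma_one_sub (1 / 3) using 1
    · norm_num
    · rw [mul_one_div, Real.sin_pi_div_three]
      field_simp
  have h2 : (2 : ℝ) ^ (4 / 3 : ℝ) = 2 * 2 ^ (1 / 3 : ℝ) := by
    rw [← Real.rpow_one_add' (by norm_num) (by norm_num)]
    norm_num
  rw [eq_div_iff (by positivity), h2]
  rw [eq_div_iff (by positivity)] at reflection
  linear_combination √3 * Real.Gamma (1 / 3) * duplication + 2 ^ (1 / 3 : ℝ) * √π * reflection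

lemma betaIntegral_one_third_one_half :
    betaIntegral (1 / 3) (1 / 2) =
      ((√3 * Real.Gamma (1 / 3) ^ 3 / (2 ^ (4 / 3 : ℝ) * π) : ℝ) : ℂ) := by
  have hbeta : betaIntegral (1 / 3) (1 / 2) =
      ((Real.Gamma (1 / 3) * √π / Real.Gamma (5 / 6) : ℝ) : ℂ) := by
    rw [betaIntegral_eq_Gamma_mul_div _ _ (by norm_num) (by norm_num), ← Real.Gamma_one_half_eq]
    push_cast [← Complex.Gamma_ofReal]
    norm_num
  rw [hbeta, Gamma_five_sixths]
  field_simp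

lemma superellipticIntegral_three_neg_half_one :
    superellipticIntegral 3 (-(1 / 2)) 1 =
      ((Real.Gamma (1 / 3) ^ 3 / (√3 * 2 ^ (4 / 3 : ℝ) * π) : ℝ) : ℂ) := by
  have h3 : (√3 : ℝ) ^ 2 = 3 := Real.sq_sqrt (by norm_num)
  have hb : (-(1 / 2) + 1 : ℂ) = 1 / 2 := by norm_num
  rw [superellipticIntegral_one three_ne_zero, hb, Nat.cast_ofNat, ← one_div,
    betaIntegral_one_third_one_half, ← ofReal_one, ← ofReal_ofNat, ← ofReal_div, ← ofReal_mul]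
  congr 1
  field_simp
  rw [h3]

lemma mul_cpow_of_arg_add_arg_mem_Ioc {u v : ℂ} (hu : u ≠ 0) (hv : v ≠ 0)
    (harg : arg u + arg v ∈ Ioc (-π) π) (b : ℂ) : (u * v) ^ b = u ^ b * v ^ b := by
  rw [cpow_def_of_ne_zero (mul_ne_zero hu hv), cpow_def_of_ne_zero hu, cpow_def_of_ne_zero hv,
    Complex.log_mul hu hv harg, add_mul, Complex.exp_add]

lemma ofReal_mul_cpow {r : ℝ} (hr : 0 < r) (v b : ℂ) : (r * v) ^ b = (r : ℂ) ^ b * v ^ b := by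
  rcases eq_or_ne v 0 with rfl | hv
  · rcases eq_or_ne b 0 with rfl | hb <;> simp [*]
  · refine mul_cpow_of_arg_add_arg_mem_Ioc (ofReal_ne_zero.2 hr.ne') hv ?_ b
    rw [arg_ofReal_of_nonneg hr.le, zero_add]
    exact arg_mem_Ioc v

lemma exp_mul_I_mul_cpow {φ : ℝ} (hφ : |φ| ≤ π / 2) {v : ℂ} (hv : 0 < v.re) (b : ℂ) :
    (Complex.exp (φ * I) * v) ^ b = Complex.exp (φ * I * b) * v ^ b := by
  obtain ⟨hφ₁, hφ₂⟩ := abs_le.1 hφ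
  obtain ⟨hv₁, hv₂⟩ := abs_lt.1 (abs_arg_lt_pi_div_two_iff.2 (Or.inl hv))
  have hφπ : φ ∈ Ioc (-π) π := ⟨by linarith [pi_pos], by linarith [pi_pos]⟩
  have harg : arg (Complex.exp (φ * I)) = φ := by
    rw [exp_mul_I, arg_cos_add_sin_mul_I hφπ]
  have hlog : Complex.log (Complex.exp (φ * I)) = φ * I :=
    Complex.log_exp (by simpa using hφπ.1) (by simpa using hφπ.2)
  rw [mul_cpow_of_arg_add_arg_mem_Ioc (Complex.exp_ne_zero _) (ne_zero_of_re_pos hv)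
    (by rw [harg]; exact ⟨by linarith, by linarith⟩), cpow_def_of_ne_zero (Complex.exp_ne_zero _),
    hlog]

lemma ofReal_sq_cpow_neg_half {r : ℝ} (hr : 0 < r) :
    ((r ^ 2 : ℝ) : ℂ) ^ (-(1 / 2) : ℂ) = (r : ℂ)⁻¹ := by
  rw [cpow_neg, one_div, ofReal_pow, sq_cpow_two_inv (by simpa using hr)]

section TriangleSide

/-- Affine parametrization of the side of the triangle of cube roots of unity that joins
`exp (-2πi/3)` (at `x = 0`) to `exp (2πi/3)` (at `x = 1`). -/
noncomputable def triangleSide (x : ℝ) : ℂ := -(1 / 2) + √3 * (x - 1 / 2) * I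

lemma ofReal_sqrt_three_sq : ((√3 : ℝ) : ℂ) ^ 2 = 3 := by
  rw [← ofReal_pow, Real.sq_sqrt (by norm_num), ofReal_ofNat]

lemma norm_triangleSide_sq (x : ℝ) : ‖triangleSide x‖ ^ 2 = 1 - 3 * (x * (1 - x)) := by
  have hre_im : triangleSide x = ((-(1 / 2) : ℝ) : ℂ) + ((√3 * (x - 1 / 2) : ℝ) : ℂ) * I := by
    simp [triangleSide]
  rw [hre_im, ← normSq_eq_norm_sq, normSq_add_mul_I, mul_pow, Real.sq_sqrt (by norm_num)]
  ring

lemma norm_triangleSide_le_one {x : ℝ} (hx : x ∈ Icc (0 : ℝ) 1) : ‖triangleSide x‖ ≤ 1 := by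
  rw [← sq_le_one_iff₀ (norm_nonneg _), norm_triangleSide_sq]
  linarith [mul_nonneg hx.1 (sub_nonneg.2 hx.2)]

lemma norm_triangleSide_lt_one {x : ℝ} (hx : x ∈ Ioo (0 : ℝ) 1) : ‖triangleSide x‖ < 1 := by
  rw [← sq_lt_one_iff₀ (norm_nonneg _), norm_triangleSide_sq]
  linarith [mul_pos hx.1 (sub_pos.2 hx.2)]

lemma one_sub_triangleSide_pow_three (x : ℝ) :
    1 - triangleSide x ^ 3 = 3 * (x * (1 - x)) * (1 - triangleSide x) := by
  have hfactor : 1 + triangleSide x + triangleSide x ^ 2 = 3 * (x * (1 - x)) := by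
    rw [triangleSide]
    linear_combination (x - 1 / 2 : ℂ) ^ 2 * (√3 ^ 2 * I_sq - ofReal_sqrt_three_sq)
  linear_combination (1 - triangleSide x) * hfactor

lemma exp_pi_div_six_mul_I : Complex.exp ((π / 6 : ℝ) * I) = (√3 + I) / 2 := by
  rw [exp_mul_I, ← ofReal_cos, ← ofReal_sin, Real.cos_pi_div_six, Real.sin_pi_div_six]
  push_cast
  ring

lemma one_sub_triangleSide (x : ℝ) : 1 - triangleSide x =
    √3 * (Complex.exp ((π / 6 : ℝ) * I) * (1 - (1 + I * √3) / 2 * x)) := by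
  rw [exp_pi_div_six_mul_I, triangleSide]
  linear_combination (√3 * x * I / 4 - 1 / 2) * ofReal_sqrt_three_sq + √3 ^ 2 * x / 4 * I_sq

lemma triangleSide_zero_pow_three : triangleSide 0 ^ 3 = 1 := by
  have h : 1 - triangleSide 0 ^ 3 = 0 := by simpa using one_sub_triangleSide_pow_three 0
  exact (sub_eq_zero.1 h).symm

lemma triangleSide_one_pow_three : triangleSide 1 ^ 3 = 1 := by
  have h : 1 - triangleSide 1 ^ 3 = 0 := by simpa using one_sub_triangleSide_pow_three 1
  exact (sub_eq_zero.1 h).symm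

lemma re_one_sub_mul_ofReal_pos {z : ℂ} {x : ℝ} (hz : z.re < 1) (hx : x ∈ Icc (0 : ℝ) 1) :
    0 < (1 - z * x).re := by
  rw [sub_re, one_re, re_mul_ofReal]
  rcases hx.2.eq_or_lt with rfl | hx1
  · linarith
  · linarith [mul_le_of_le_one_left hx.1 hz.le]

lemma re_one_sub_mul_sin_sq_pos (θ : ℝ) :
    0 < (1 - (1 + I * √3) / 2 * (Real.sin θ : ℂ) ^ 2).re := by
  rw [← ofReal_pow]
  exact re_one_sub_mul_ofReal_pos (by norm_num) ⟨sq_nonneg _, Real.sin_sq_le_one θ⟩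

lemma sin_mul_cos_pos {θ : ℝ} (hθ : θ ∈ Ioo 0 (π / 2)) : 0 < Real.sin θ * Real.cos θ :=
  mul_pos (Real.sin_pos_of_mem_Ioo ⟨hθ.1, by linarith [hθ.2, pi_pos]⟩)
    (Real.cos_pos_of_mem_Ioo ⟨by linarith [hθ.1, pi_pos], hθ.2⟩)

lemma sin_sq_mem_Ioo {θ : ℝ} (hθ : θ ∈ Ioo 0 (π / 2)) : Real.sin θ ^ 2 ∈ Ioo 0 1 := by
  have hsc := (sin_mul_cos_pos hθ).ne'
  have hsin : 0 < Real.sin θ ^ 2 := sq_pos_of_ne_zero (left_ne_zero_of_mul hsc)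
  have hcos : 0 < Real.cos θ ^ 2 := sq_pos_of_ne_zero (right_ne_zero_of_mul hsc)
  exact ⟨hsin, by linarith [Real.sin_sq_add_cos_sq θ]⟩

lemma one_sub_triangleSide_sin_sq_pow_three_cpow {θ : ℝ} (hθ : θ ∈ Ioo 0 (π / 2)) :
    (1 - triangleSide (Real.sin θ ^ 2) ^ 3) ^ (-(1 / 2) : ℂ) =
      (((3 : ℝ) ^ (3 / 4 : ℝ) * (Real.sin θ * Real.cos θ) : ℝ) : ℂ)⁻¹ *
        (Complex.exp (-((π / 12 : ℝ) * I)) *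
          (1 - (1 + I * √3) / 2 * (Real.sin θ : ℂ) ^ 2) ^ (-(1 / 2) : ℂ)) := by
  have hsc := sin_mul_cos_pos hθ
  have hscale : 3 * √3 * (Real.sin θ ^ 2 * (1 - Real.sin θ ^ 2)) =
      (3 ^ (3 / 4 : ℝ) * (Real.sin θ * Real.cos θ)) ^ 2 := by
    have h34 : ((3 : ℝ) ^ (3 / 4 : ℝ)) ^ 2 = 3 * √3 := by
      rw [Real.sqrt_eq_rpow, ← Real.rpow_one_add' (by norm_num) (by norm_num),
        ← Real.rpow_mul_natCast (by norm_num)]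
      norm_num
    rw [mul_pow, mul_pow, h34, ← Real.cos_sq']
  have hfactor : 1 - triangleSide (Real.sin θ ^ 2) ^ 3 =
      (((3 ^ (3 / 4 : ℝ) * (Real.sin θ * Real.cos θ)) ^ 2 : ℝ) : ℂ) *
        (Complex.exp ((π / 6 : ℝ) * I) * (1 - (1 + I * √3) / 2 * (Real.sin θ : ℂ) ^ 2)) := by
    rw [one_sub_triangleSide_pow_three, one_sub_triangleSide, ← hscale]
    push_cast
    ring
  have hexp : ((π / 6 : ℝ) * I * (-(1 / 2)) : ℂ) = -((π / 12 : ℝ) * I) := by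
    push_cast
    ring
  rw [hfactor, ofReal_mul_cpow (by positivity), ofReal_sq_cpow_neg_half (by positivity),
    exp_mul_I_mul_cpow (abs_le.2 ⟨by linarith [pi_pos], by linarith [pi_pos]⟩)
      (re_one_sub_mul_sin_sq_pos θ), hexp]

lemma hasDerivAt_triangleSide_sin_sq (θ : ℝ) : HasDerivAt (fun θ ↦ triangleSide (Real.sin θ ^ 2))
    (2 * √3 * I * ((Real.sin θ * Real.cos θ : ℝ) : ℂ)) θ := by
  have hsin : HasDerivAt (fun θ ↦ Real.sin θ ^ 2) (2 * Real.sin θ * Real.cos θ) θ := by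
    simpa using (Real.hasDerivAt_sin θ).fun_pow 2
  refine ((((hsin.ofReal_comp.sub_const (1 / 2)).const_mul (√3 : ℂ)).mul_const I).const_add
    (-(1 / 2))).congr_deriv ?_
  push_cast
  ring

lemma hasDerivAt_superellipticIntegral_triangleSide_sin_sq {θ : ℝ} (hθ : θ ∈ Ioo 0 (π / 2)) :
    HasDerivAt (fun θ ↦ superellipticIntegral 3 (-(1 / 2)) (triangleSide (Real.sin θ ^ 2)))
      (2 * √3 * I / ((3 : ℝ) ^ (3 / 4 : ℝ) : ℝ) * Complex.exp (-((π / 12 : ℝ) * I)) *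
        (1 - (1 + I * √3) / 2 * (Real.sin θ : ℂ) ^ 2) ^ (-(1 / 2) : ℂ)) θ := by
  have hchain := (hasDerivAt_superellipticIntegral (b := -(1 / 2)) three_ne_zero
    (norm_triangleSide_lt_one (sin_sq_mem_Ioo hθ))).comp θ (hasDerivAt_triangleSide_sin_sq θ)
  rw [one_sub_triangleSide_sin_sq_pow_three_cpow hθ] at hchain
  refine hchain.congr_deriv ?_
  have hsc : ((Real.sin θ * Real.cos θ : ℝ) : ℂ) ≠ 0 :=
    ofReal_ne_zero.2 (sin_mul_cos_pos hθ).ne'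
  rw [ofReal_mul (3 ^ (3 / 4 : ℝ))]
  field_simp

lemma integral_one_sub_mul_sin_sq_cpow_neg_half :
    ∫ θ in (0 : ℝ)..(π / 2), (1 - (1 + I * √3) / 2 * (Real.sin θ : ℂ) ^ 2) ^ (-(1 / 2) : ℂ) =
      ((3 : ℝ) ^ (3 / 4 : ℝ) : ℝ) / 2 * Complex.exp ((π / 12 : ℝ) * I) *
        superellipticIntegral 3 (-(1 / 2)) 1 := by
  have hcont : ContinuousOn
      (fun θ ↦ superellipticIntegral 3 (-(1 / 2)) (triangleSide (Real.sin θ ^ 2)))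
      (Icc 0 (π / 2)) :=
    (continuousOn_superellipticIntegral three_ne_zero (by norm_num)).comp
      (fun θ _ ↦ (hasDerivAt_triangleSide_sin_sq θ).continuousAt.continuousWithinAt)
      fun θ _ ↦ mem_closedBall_zero_iff.2
        (norm_triangleSide_le_one ⟨sq_nonneg _, Real.sin_sq_le_one θ⟩)
  have hint : Continuous fun θ : ℝ ↦
      (1 - (1 + I * √3) / 2 * (Real.sin θ : ℂ) ^ 2) ^ (-(1 / 2) : ℂ) :=
    Continuous.cpow (by fun_prop) continuous_const fun θ ↦
      Or.inl (re_one_sub_mul_sin_sq_pos θ)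
  have hFTC := intervalIntegral.integral_eq_sub_of_hasDerivAt_of_le (by positivity) hcont
    (fun θ hθ ↦ hasDerivAt_superellipticIntegral_triangleSide_sin_sq hθ)
    ((hint.const_mul _).intervalIntegrable _ _)
  have hends : triangleSide 1 - triangleSide 0 = √3 * I := by simp [triangleSide]; ring
  simp only [intervalIntegral.integral_const_mul, Real.sin_pi_div_two, Real.sin_zero, one_pow,
    zero_pow two_ne_zero, superellipticIntegral_of_pow_eq_one triangleSide_zero_pow_three,
    superellipticIntegral_of_pow_eq_one triangleSide_one_pow_three, ← sub_mul, hends,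
    Complex.exp_neg] at hFTC
  field_simp at hFTC ⊢
  linear_combination hFTC

end TriangleSide

lemma exp_pi_div_twelve_mul_I : Complex.exp ((π / 12 : ℝ) * I) =
    (√3 * (1 + I) + (1 - I)) / (2 * √2) := by
  have hangle : ((π / 12 : ℝ) * I : ℂ) = (π / 3 : ℝ) * I + (-(π / 4) : ℝ) * I := by
    push_cast
    ring
  have h2 : ((√2 : ℝ) : ℂ) ^ 2 = 2 := by
    rw [← ofReal_pow, Real.sq_sqrt (by norm_num), ofReal_ofNat]
  rw [hangle, Complex.exp_add]
  simp only [exp_mul_I, ← ofReal_cos, ← ofReal_sin, Real.cos_neg, Real.sin_neg,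
    Real.cos_pi_div_three, Real.sin_pi_div_three, Real.cos_pi_div_four, Real.sin_pi_div_four]
  push_cast
  field_simp
  linear_combination (1 + √3 * I) * (1 - I) * h2 - 2 * √3 * I_sq

/-- With `ω = (-1 + i√3)/2` (so that `-ω = (1 + i√3)/2`),
`₂F₁(1/2,1/2;1;-ω) = ((1+i)/(π²√2))·2^(-7/3)·3^(3/4)·Γ(1/3)³
 + ((1-i)/(π²√2))·2^(-7/3)·3^(1/4)·Γ(1/3)³`. -/
theorem hypF_at_minus_omega :
    hypF ((1 + Complex.I * Real.sqrt 3) / 2) =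
      ((1 + Complex.I) / (π^2 * Real.sqrt 2)) *
        ((2:ℝ) ^ (-(7:ℝ)/3) * (3:ℝ) ^ ((3:ℝ)/4) * Real.Gamma (1/3) ^ 3 : ℝ) +
      ((1 - Complex.I) / (π^2 * Real.sqrt 2)) *
        ((2:ℝ) ^ (-(7:ℝ)/3) * (3:ℝ) ^ ((1:ℝ)/4) * Real.Gamma (1/3) ^ 3 : ℝ) := by
  have h3 : (3 : ℝ) ^ (3 / 4 : ℝ) = √3 * 3 ^ (1 / 4 : ℝ) := by
    rw [Real.sqrt_eq_rpow, ← Real.rpow_add (by norm_num)]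
    norm_num
  have h2 : (2 : ℝ) ^ (-7 / 3 : ℝ) = (2 * 2 ^ (4 / 3 : ℝ))⁻¹ := by
    rw [← Real.rpow_one_add' (by norm_num) (by norm_num), ← Real.rpow_neg (by norm_num)]
    norm_num
  rw [hypF, integral_one_sub_mul_sin_sq_cpow_neg_half, superellipticIntegral_three_neg_half_one,
    exp_pi_div_twelve_mul_I, h2, h3]
  push_cast
  field_simp
end
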